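/- The expected number of calls to complete an (n,m)-Bingo card satisfies E[B] = (m·n + 1) · ∫₀¹ Q(p) dp, where Q(p) is the probability that no winning line is fully marked when each square of the board is independently marked with probability p. -/

import Mathlib

open Finset

/-- The row of an `n × n` Bingo board through index `i`. -/
def bingoRow (n : ℕ) (i : Fin n) : Finset (Fin n × Fin n) :=
  Finset.univ.filter (fun s => s.1 = i)

/-- The column of an `n × n` Bingo board through index `j`. -/
def bingoCol (n : ℕ) (j : Fin n) : Finset (Fin n × Fin n) :=
  Finset.univ.filter (fun s => s.2 = j)

/-- The main diagonal `{(i,i)}`. -/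
def bingoDiag (n : ℕ) : Finset (Fin n × Fin n) :=
  Finset.univ.filter (fun s => (s.2 : ℕ) = (s.1 : ℕ))

/-- The anti-diagonal `{(i, n-1-i)}`. -/
def bingoAntiDiag (n : ℕ) : Finset (Fin n × Fin n) :=
  Finset.univ.filter (fun s => (s.2 : ℕ) = n - 1 - (s.1 : ℕ))

/-- The set `𝓛` of winning lines: `n` rows, `n` columns and the two diagonals. -/
def bingoLines (n : ℕ) : Finset (Finset (Fin n × Fin n)) :=
  (Finset.univ.image (bingoRow n)) ∪ (Finset.univ.image (bingoCol n)) ∪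
    {bingoDiag n, bingoAntiDiag n}

/-- An `(n,m)`-Bingo card: an injective assignment of numbers such that column `j`
only uses numbers in `[m*j, m*(j+1))`. -/
def IsBingoCard (n m : ℕ) (c : Fin n × Fin n → Fin (m * n)) : Prop :=
  Function.Injective c ∧
    ∀ i j : Fin n, m * (j : ℕ) ≤ (c (i, j) : ℕ) ∧ (c (i, j) : ℕ) < m * ((j : ℕ) + 1)

/-- Bingo is achieved within the first `k` calls of `σ`: some winning line has all of its
numbers among `σ 0, …, σ (k-1)`. -/
def BingoWins (n m : ℕ) (c : Fin n × Fin n → Fin (m * n))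
    (σ : Equiv.Perm (Fin (m * n))) (k : ℕ) : Prop :=
  ∃ L ∈ bingoLines n, ∀ s ∈ L, ∃ t : Fin (m * n), (t : ℕ) < k ∧ σ t = c s

/-- `S_n = ∑_{∅ ≠ X ⊆ 𝓛} (-1)^{|X|+1} / (m(X)+1)`, where `m(X)` is the number of squares
covered by the union of the lines in `X`. -/
noncomputable def Sn (n : ℕ) : ℝ :=
  ∑ X ∈ (bingoLines n).powerset.filter (fun X => X.Nonempty),
    (-1 : ℝ) ^ (X.card + 1) / (((X.sup id).card : ℝ) + 1)

/-- The probability of the marking pattern `f` when each square is independently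
marked with probability `p`. -/
def markWeight (n : ℕ) (p : ℝ) (f : Fin n × Fin n → Bool) : ℝ :=
  ∏ s : Fin n × Fin n, (if f s then p else 1 - p)

/-- `P(p)`: the probability that at least one winning line is fully marked, when each
square is independently marked with probability `p`. -/
noncomputable def Pmark (n : ℕ) (p : ℝ) : ℝ :=
  ∑ f ∈ (Finset.univ : Finset (Fin n × Fin n → Bool)).filter
      (fun f => ∃ L ∈ bingoLines n, ∀ s ∈ L, f s = true),
    markWeight n p f

/-- `Q(p)`: the probability that no winning line is fully marked, when each square is
independently marked with probability `p`. -/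
noncomputable def Qmark (n : ℕ) (p : ℝ) : ℝ :=
  ∑ f ∈ (Finset.univ : Finset (Fin n × Fin n → Bool)).filter
      (fun f => ¬ ∃ L ∈ bingoLines n, ∀ s ∈ L, f s = true),
    markWeight n p f

lemma bingo_beta (l : ℕ) : ∀ k : ℕ, ∫ p in (0:ℝ)..1, p ^ k * (1 - p) ^ l =
    (k.factorial : ℝ) * l.factorial / (k + l + 1).factorial := by
  induction l with
  | zero =>
    intro k
    simp only [pow_zero, mul_one, integral_pow, Nat.add_zero]
    rw [Nat.factorial_succ]
    have := Nat.factorial_ne_zero k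
    push_cast
    field_simp
    simp
  | succ l ih =>
    intro k
    have h1 : ∫ p in (0:ℝ)..1, (((k:ℝ) + 1) * (p ^ k * (1 - p) ^ (l + 1)) -
        ((l:ℝ) + 1) * (p ^ (k + 1) * (1 - p) ^ l)) = 0 := by
      have hd : ∀ x ∈ Set.uIcc (0:ℝ) 1, HasDerivAt (fun p : ℝ => p ^ (k + 1) * (1 - p) ^ (l + 1))
          (((k:ℝ) + 1) * (x ^ k * (1 - x) ^ (l + 1)) -
            ((l:ℝ) + 1) * (x ^ (k + 1) * (1 - x) ^ l)) x := by
        intro x _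
        have a := (hasDerivAt_id x).fun_pow (k + 1)
        have b := ((hasDerivAt_id x).const_sub 1).fun_pow (l + 1)
        refine (a.fun_mul b).congr_deriv ?_
        simp
        ring
      rw [intervalIntegral.integral_eq_sub_of_hasDerivAt hd
        (Continuous.intervalIntegrable (by fun_prop) _ _)]
      simp
    rw [intervalIntegral.integral_sub (Continuous.intervalIntegrable (by fun_prop) _ _)
      (Continuous.intervalIntegrable (by fun_prop) _ _),
      intervalIntegral.integral_const_mul, intervalIntegral.integral_const_mul, ih (k + 1)] at h1
    have e : k + 1 + l + 1 = k + (l + 1) + 1 := by ring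
    rw [e] at h1
    have hk : (0:ℝ) < (k:ℝ) + 1 := by positivity
    have : ∫ p in (0:ℝ)..1, p ^ k * (1 - p) ^ (l + 1) =
      ((l:ℝ) + 1) * (((k+1).factorial : ℝ) * l.factorial / (k + (l + 1) + 1).factorial)
        / ((k:ℝ) + 1) := by
      rw [eq_div_iff hk.ne']; linarith
    rw [this, Nat.factorial_succ k, Nat.factorial_succ l]
    push_cast
    field_simp

lemma bingo_count (N : ℕ) (A : Finset (Fin N)) :
    (univ.filter (fun σ : Equiv.Perm (Fin N) =>
      ∀ x, x ∈ A ↔ ((σ.symm x : Fin N) : ℕ) < A.card)).card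
      = A.card.factorial * (N - A.card).factorial := by
  have h := Numbering.card_prefixed A
  rw [Fintype.card_fin] at h
  rw [← h]
  refine Finset.card_bij' (fun σ _ => σ.symm.trans (finCongr (Fintype.card_fin N).symm))
    (fun f _ => (f.trans (finCongr (Fintype.card_fin N))).symm) ?_ ?_ ?_ ?_
  · intro σ hσ
    simpa [Numbering.IsPrefix] using hσ
  · intro f hf
    simpa [Numbering.IsPrefix] using hf
  · intro σ _
    ext x; simp
  · intro f _
    ext x; simp

lemma bingo_marginal (n N : ℕ) (c : Fin n × Fin n → Fin N) (hc : Function.Injective c) (p : ℝ) :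
    Qmark n p = ∑ A ∈ (univ : Finset (Finset (Fin N))).filter
      (fun A => ¬ ∃ L ∈ bingoLines n, ∀ s ∈ L, c s ∈ A),
      p ^ A.card * (1 - p) ^ (N - A.card) := by
  classical
  have hw : ∀ f : Fin n × Fin n → Bool, markWeight n p f =
      ∑ A ∈ (univ : Finset (Finset (Fin N))).filter (fun A => (fun s => decide (c s ∈ A)) = f),
        p ^ A.card * (1 - p) ^ (N - A.card) := by
    intro f
    let t : Fin N → Finset Bool := fun x => univ.filter (fun b => ∀ s, c s = x → b = f s)
    have h1 : ∏ x, ∑ b ∈ t x, (if b then p else 1 - p) = markWeight n p f := by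
      unfold markWeight
      trans ∏ x ∈ univ.image c, ∑ b ∈ t x, (if b then p else 1 - p)
      · symm
        apply Finset.prod_subset (Finset.subset_univ _)
        intro x _ hx
        have : t x = univ := by
          ext b
          simp only [t, mem_filter, mem_univ, true_and, iff_true]
          intro s hs
          exact absurd (by simp [← hs]) hx
        rw [this]; simp
      · rw [Finset.prod_image hc.injOn]
        refine Finset.prod_congr rfl fun s _ => ?_
        have : t (c s) = {f s} := by
          ext b
          simp only [t, mem_filter, mem_univ, true_and, mem_singleton]
          exact ⟨fun h => h s rfl, fun h s' hs' => by rw [hc hs', h]⟩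
        rw [this, Finset.sum_singleton]
    rw [← h1, Finset.prod_univ_sum]
    refine Finset.sum_bij' (fun h _ => univ.filter (fun x => h x = true))
      (fun A _ => fun x => decide (x ∈ A)) ?_ ?_ ?_ ?_ ?_
    · intro h hh
      rw [Fintype.mem_piFinset] at hh
      simp only [mem_filter, mem_univ, true_and, Bool.decide_eq_true]
      funext s
      have := hh (c s)
      simp only [t, mem_filter, mem_univ, true_and] at this
      exact this s rfl
    · intro A hA
      simp only [mem_filter, mem_univ, true_and] at hA
      rw [Fintype.mem_piFinset]
      intro x
      simp only [t, mem_filter, mem_univ, true_and]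
      rintro s rfl
      rw [← hA]
    · intro h _
      funext x; simp
    · intro A _
      ext x; simp
    · intro h _
      rw [Finset.prod_ite, Finset.prod_const, Finset.prod_const, Finset.filter_not,
        Finset.card_sdiff_of_subset (Finset.filter_subset _ _)]
      simp
  unfold Qmark
  simp_rw [hw]
  rw [Finset.sum_filter, Finset.sum_filter]
  simp_rw [Finset.sum_filter]
  rw [← Finset.sum_congr rfl (fun f _ => ?_)]
  rotate_left
  · exact fun f => ∑ A : Finset (Fin N), if (fun s => decide (c s ∈ A)) = f then
      (if ¬ ∃ L ∈ bingoLines n, ∀ s ∈ L, c s ∈ A then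
        p ^ A.card * (1 - p) ^ (N - A.card) else 0) else 0
  · by_cases h : ∃ L ∈ bingoLines n, ∀ s ∈ L, f s = true
    · rw [if_neg (not_not.2 h)]
      refine Finset.sum_eq_zero fun A _ => ?_
      split_ifs with h1 h2 <;> try rfl
      subst h1
      exact absurd (by simpa using h) h2
    · rw [if_pos h]
      refine Finset.sum_congr rfl fun A _ => ?_
      split_ifs with h1 h2 <;> try rfl
      subst h1
      exact absurd (by simpa using h2) h
  · rw [Finset.sum_comm]
    refine Finset.sum_congr rfl fun A _ => ?_
    rw [Finset.sum_ite_eq]; simp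

lemma bingo_line_nonempty (n : ℕ) (hn : 1 ≤ n) (L : Finset (Fin n × Fin n))
    (hL : L ∈ bingoLines n) : L.Nonempty := by
  have z : Fin n := ⟨0, hn⟩
  simp only [bingoLines, mem_union, mem_image, mem_univ, true_and, mem_insert,
    mem_singleton] at hL
  rcases hL with (⟨i, rfl⟩ | ⟨j, rfl⟩) | rfl | rfl
  · exact ⟨(i, i), by simp [bingoRow]⟩
  · exact ⟨(j, j), by simp [bingoCol]⟩
  · exact ⟨(z, z), by simp [bingoDiag]⟩
  · exact ⟨(z, ⟨n - 1 - z, by omega⟩), by simp [bingoAntiDiag]⟩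

lemma bingo_B (n m : ℕ) (hn : 1 ≤ n) (hm : n ≤ m)
    (c : Fin n × Fin n → Fin (m * n)) (σ : Equiv.Perm (Fin (m * n))) (b : ℕ)
    (hb : IsLeast {k : ℕ | 1 ≤ k ∧ BingoWins n m c σ k} b) :
    b = ((univ : Finset (Finset (Fin (m * n)))).filter
      (fun A => (¬ ∃ L ∈ bingoLines n, ∀ s ∈ L, c s ∈ A) ∧
        ∀ x, x ∈ A ↔ ((σ.symm x : Fin (m * n)) : ℕ) < A.card)).card := by
  classical
  have hwin : ∀ k, BingoWins n m c σ k ↔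
      ∃ L ∈ bingoLines n, ∀ s ∈ L, ((σ.symm (c s) : Fin (m * n)) : ℕ) < k := by
    intro k
    unfold BingoWins
    refine exists_congr fun L => and_congr_right fun _ => forall₂_congr fun s _ => ?_
    constructor
    · rintro ⟨t, ht, h⟩
      rw [← h]; simpa using ht
    · intro h
      exact ⟨_, h, by simp⟩
  let F : ℕ → Finset (Fin (m * n)) := fun k => univ.filter (fun x => ((σ.symm x : Fin (m * n)) : ℕ) < k)
  have hF : ∀ k ≤ m * n, (F k).card = k := by
    intro k hk
    have : F k = (univ.filter (fun t : Fin (m * n) => (t : ℕ) < k)).map σ.toEmbedding := by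
      ext x
      simp [F, Finset.mem_map_equiv]
    rw [this, Finset.card_map]
    rw [Fin.card_filter_val_lt, min_eq_right hk]
  have hN : 1 ≤ m * n := Nat.mul_pos (by omega) (by omega)
  have hbN : b ≤ m * n := by
    apply hb.2
    refine ⟨hN, (hwin _).2 ⟨bingoDiag n, by simp [bingoLines], fun s _ => Fin.is_lt _⟩⟩
  have himg : (univ : Finset (Finset (Fin (m * n)))).filter
      (fun A => (¬ ∃ L ∈ bingoLines n, ∀ s ∈ L, c s ∈ A) ∧
        ∀ x, x ∈ A ↔ ((σ.symm x : Fin (m * n)) : ℕ) < A.card) = (range b).image F := by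
    ext A
    simp only [mem_filter, mem_univ, true_and, mem_image, mem_range]
    constructor
    · rintro ⟨hbad, hA⟩
      refine ⟨A.card, ?_, ?_⟩
      · by_contra hlt
        apply hbad
        obtain ⟨L, hL, h⟩ := (hwin _).1 hb.1.2
        exact ⟨L, hL, fun s hs => (hA _).2 (lt_of_lt_of_le (h s hs) (not_lt.1 hlt))⟩
      · ext x
        simp [F, hA x]
    · rintro ⟨k, hk, rfl⟩
      have hc := hF k (by omega)
      refine ⟨?_, fun x => by rw [hc]; simp [F]⟩
      rintro ⟨L, hL, h⟩
      have h' : ∀ s ∈ L, ((σ.symm (c s) : Fin (m * n)) : ℕ) < k := fun s hs => by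
        simpa [F] using h s hs
      obtain ⟨s, hs⟩ := bingo_line_nonempty n hn L hL
      have h1 := h' s hs
      have := hb.2 ⟨show 1 ≤ k by omega, (hwin k).2 ⟨L, hL, h'⟩⟩
      omega
  rw [himg, Finset.card_image_of_injOn, card_range]
  intro i hi j hj hij
  simp only [coe_range, Set.mem_Iio] at hi hj
  rw [← hF i (by omega), ← hF j (by omega)]
  exact congrArg _ hij

/-- `E[B] = (m·n + 1) · ∫₀¹ Q(p) dp`, where `Q(p)` is the probability that no
winning line is fully marked under independent Bernoulli(`p`) marking of the squares. -/
theorem bingo_expectation_integral (n m : ℕ) (hn : 1 ≤ n) (hm : n ≤ m)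
    (c : Fin n × Fin n → Fin (m * n)) (hc : IsBingoCard n m c)
    (B : Equiv.Perm (Fin (m * n)) → ℕ)
    (hB : ∀ σ, IsLeast {k : ℕ | 1 ≤ k ∧ BingoWins n m c σ k} (B σ)) :
    (∑ σ : Equiv.Perm (Fin (m * n)), (B σ : ℝ)) / (Nat.factorial (m * n)) =
      ((m * n : ℕ) + 1) * ∫ p in (0:ℝ)..1, Qmark n p := by
  classical
  have h1 : (∑ σ : Equiv.Perm (Fin (m * n)), (B σ : ℝ)) =
      ∑ A ∈ (univ : Finset (Finset (Fin (m * n)))).filter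
        (fun A => ¬ ∃ L ∈ bingoLines n, ∀ s ∈ L, c s ∈ A),
        ((A.card.factorial * (m * n - A.card).factorial : ℕ) : ℝ) := by
    rw [← Nat.cast_sum, ← Nat.cast_sum]
    congr 1
    simp_rw [← bingo_count]
    rw [Finset.sum_congr rfl fun σ _ => bingo_B n m hn hm c σ (B σ) (hB σ)]
    simp_rw [← Finset.filter_filter]
    exact Finset.sum_card_bipartiteAbove_eq_sum_card_bipartiteBelow
      (fun (σ : Equiv.Perm (Fin (m * n))) (A : Finset (Fin (m * n))) =>
        ∀ x, x ∈ A ↔ ((σ.symm x : Fin (m * n)) : ℕ) < A.card)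
  simp_rw [bingo_marginal n (m * n) c hc.1]
  rw [intervalIntegral.integral_finsetSum
    (fun A _ => Continuous.intervalIntegrable (by fun_prop) _ _), h1, Finset.sum_div,
    Finset.mul_sum]
  refine Finset.sum_congr rfl fun A _ => ?_
  have hA : A.card ≤ m * n := by simpa using A.card_le_univ
  rw [bingo_beta, Nat.add_sub_cancel' hA, Nat.factorial_succ]
  have := Nat.factorial_ne_zero (m * n)
  have h2 : ((m * n : ℕ) : ℝ) + 1 ≠ 0 := by positivity
  push_cast at h2 ⊢
  field_simp
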